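/- arXiv:1704.04472 — 2 statements merged into one kernel-verified Lean document; each statement's English description precedes it below -/
import Mathlib

section
/- For every alphabet Σ of size σ ≥ 2, every n ∈ ℕ, and every real t with 0 ≤ t ≤ 0.1·ln σ, if S ∈ Σⁿ is chosen uniformly at random, then E[e^{t·(n − L(S))}] ≤ C(t), where C(t) = (σ³ − σ²e^{2t})/(σ³ − 2σ²e^{2t} + e^{4t}). -/
/-!
A bordered string `S` has a shortest border `u`. Minimality forces `u` to be unbordered and to
occupy at most half of `S`, so `S = u m u` and `|S| - L(S) ≤ 2|u| + (|m| - L(m))`, while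
`L(S) = |S|` for unbordered `S`. Writing `a n = E[y^(n - L(S))]` and `N k` for the number of
unbordered strings of length `k`, a union bound over `|u| = k` gives the renewal inequality

  `a n ≤ 1 + ∑_{1 ≤ k ≤ n/2} N k (y²/σ²)^k a (n - 2k)`.

An unbordered string of length `k ≥ 2` has distinct first and last letters, so
`N k ≤ σ^k - σ^(k-1)`. Comparing with a geometric series, the weights sum to at most
`q = x(σ² - x)/(σ²(σ - x))` with `x = y²`, and `a n ≤ 1/(1 - q)` by induction. For `y = e^t` this
last bound is `C(t)`.
-/

open Finset

/-- `S` has a border of length `ℓ`: `1 ≤ ℓ ≤ |S|` and the length-`ℓ` prefix of `S`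
equals its length-`ℓ` suffix. -/
def HasBorder {α : Type*} (S : List α) (ℓ : ℕ) : Prop :=
  1 ≤ ℓ ∧ ℓ ≤ S.length ∧ S.take ℓ = S.drop (S.length - ℓ)

/-- A string is unbordered if it has no proper border (no border of length `< |S|`). -/
def Unbordered {α : Type*} (S : List α) : Prop :=
  ∀ ℓ, ℓ < S.length → ¬ HasBorder S ℓ

/-- `maxUnb S` is `L(S)`: the maximum length of (nonempty) unbordered factors of `S`. -/
noncomputable def maxUnb {α : Type*} (S : List α) : ℕ :=
  sSup {k | ∃ T, T ≠ [] ∧ T <:+: S ∧ Unbordered T ∧ T.length = k}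

/-- `p > 0` is a period of `T` if `T[i] = T[i+p]` whenever both indices are valid. -/
def IsPeriod {α : Type*} (T : List α) (p : ℕ) : Prop :=
  0 < p ∧ ∀ (i : ℕ) (h : i + p < T.length),
    T[i]'(Nat.lt_of_le_of_lt (Nat.le_add_right i p) h) = T[i + p]'h

/-- `per T` is the shortest period of `T`. -/
noncomputable def per {α : Type*} (T : List α) : ℕ := sInf {p | IsPeriod T p}

/-- `borderF S` is `F(S)`: the length of the shortest border of `S`. -/
noncomputable def borderF {α : Type*} (S : List α) : ℕ := sInf {ℓ | HasBorder S ℓ}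

/-- `substr S i j` is the factor `S[i,j]` in 1-based closed-interval indexing. -/
def substr {α : Type*} (S : List α) (i j : ℕ) : List α := (S.drop (i - 1)).take (j + 1 - i)

/-! ### Borders -/

section Borders

variable {α : Type*} {S : List α} {ℓ j : ℕ}

theorem HasBorder.of_take (hS : HasBorder S ℓ) (hj : HasBorder (S.take ℓ) j) : HasBorder S j := by
  obtain ⟨-, hℓ, hpre⟩ := hS
  obtain ⟨hj1, hjℓ, hsuf⟩ := hj
  rw [List.length_take_of_le hℓ] at hjℓ hsuf
  refine ⟨hj1, hjℓ.trans hℓ, ?_⟩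
  calc S.take j = (S.take ℓ).take j := by rw [List.take_take, min_eq_left hjℓ]
    _ = (S.drop (S.length - ℓ)).drop (ℓ - j) := by rw [hsuf, hpre]
    _ = S.drop (S.length - j) := by rw [List.drop_drop]; congr 1; omega

theorem HasBorder.of_overlap (hS : HasBorder S ℓ) (hlt : S.length < 2 * ℓ) :
    HasBorder S (2 * ℓ - S.length) := by
  obtain ⟨-, hℓ, hpre⟩ := hS
  refine ⟨by omega, by omega, ?_⟩
  calc S.take (2 * ℓ - S.length) = (S.take ℓ).take (2 * ℓ - S.length) := by
        rw [List.take_take, min_eq_left (by omega)]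
    _ = (S.drop (S.length - ℓ)).take (2 * ℓ - S.length) := by rw [hpre]
    _ = (S.take ℓ).drop (S.length - ℓ) := by rw [List.drop_take]; congr 1; omega
    _ = S.drop (S.length - (2 * ℓ - S.length)) := by
        rw [hpre, List.drop_drop]; congr 1; omega

theorem HasBorder.exists_eq_append (hS : HasBorder S ℓ) (hle : 2 * ℓ ≤ S.length) :
    ∃ m, S = S.take ℓ ++ m ++ S.take ℓ := by
  obtain ⟨-, -, hpre⟩ := hS
  have hdrop : (S.drop ℓ).drop (S.length - 2 * ℓ) = S.take ℓ := by
    rw [hpre, List.drop_drop]; congr 1; omega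
  refine ⟨(S.drop ℓ).take (S.length - 2 * ℓ), ?_⟩
  rw [← hdrop, List.append_assoc, List.take_append_drop, hdrop, List.take_append_drop]

theorem hasBorder_borderF (hS : HasBorder S ℓ) : HasBorder S (borderF S) :=
  Nat.sInf_mem (s := {ℓ | HasBorder S ℓ}) ⟨ℓ, hS⟩

theorem HasBorder.borderF_le (hS : HasBorder S ℓ) : borderF S ≤ ℓ :=
  Nat.sInf_le hS

theorem HasBorder.unbordered_take_borderF (hS : HasBorder S ℓ) :
    Unbordered (S.take (borderF S)) := by
  intro j hj hborder
  have hle := ((hasBorder_borderF hS).of_take hborder).borderF_le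
  have := List.length_take_le (borderF S) S
  omega

theorem HasBorder.two_mul_borderF_le (hS : HasBorder S ℓ) (hlt : ℓ < S.length) :
    2 * borderF S ≤ S.length := by
  by_contra! hoverlap
  have := ((hasBorder_borderF hS).of_overlap hoverlap).borderF_le
  have := hS.borderF_le
  omega

theorem exists_eq_append_of_not_unbordered (hS : ¬ Unbordered S) :
    ∃ u m, u ≠ [] ∧ Unbordered u ∧ S = u ++ m ++ u := by
  obtain ⟨ℓ, hlt, hℓ⟩ : ∃ ℓ, ℓ < S.length ∧ HasBorder S ℓ := by
    simpa only [Unbordered, not_forall, not_not, exists_prop] using hS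
  obtain ⟨m, hm⟩ := (hasBorder_borderF hℓ).exists_eq_append (hℓ.two_mul_borderF_le hlt)
  have hne : S.take (borderF S) ≠ [] := by
    have := (hasBorder_borderF hℓ).1
    rw [← List.length_pos_iff, List.length_take]
    omega
  exact ⟨S.take (borderF S), m, hne, hℓ.unbordered_take_borderF, hm⟩

theorem hasBorder_append_take_one (hS : S ≠ []) : HasBorder (S ++ S.take 1) 1 := by
  obtain ⟨a, l, rfl⟩ := List.exists_cons_of_ne_nil hS
  exact ⟨le_rfl, by simp, by simp⟩

end Borders

/-! ### The defect `|S| - L(S)` -/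

section Defect

variable {α : Type*} {S T : List α}

theorem length_mem_upperBounds_unbordered_factors (S : List α) :
    S.length ∈ upperBounds {k | ∃ T, T ≠ [] ∧ T <:+: S ∧ Unbordered T ∧ T.length = k} := by
  rintro k ⟨T, -, hT, -, rfl⟩
  exact hT.length_le

theorem maxUnb_le_length (S : List α) : maxUnb S ≤ S.length :=
  csSup_le' (length_mem_upperBounds_unbordered_factors S)

theorem maxUnb_mono (h : T <:+: S) : maxUnb T ≤ maxUnb S :=
  csSup_le_csSup' ⟨_, length_mem_upperBounds_unbordered_factors S⟩
    fun _ ⟨U, hne, hU, hunb, hlen⟩ => ⟨U, hne, hU.trans h, hunb, hlen⟩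

theorem Unbordered.length_le_maxUnb (h : Unbordered S) : S.length ≤ maxUnb S := by
  rcases eq_or_ne S [] with rfl | hne
  · exact Nat.zero_le _
  · exact le_csSup ⟨_, length_mem_upperBounds_unbordered_factors S⟩
      ⟨S, hne, List.infix_refl S, h, rfl⟩

/-- The defect `|S| - L(S)` of a string, the random variable whose exponential moments are bounded.
Subtraction in `ℕ` is harmless, as `L(S) ≤ |S|`. -/
noncomputable def unborderedDefect (S : List α) : ℕ := S.length - maxUnb S

theorem cast_unborderedDefect {R : Type*} [AddGroupWithOne R] (S : List α) :
    (unborderedDefect S : R) = S.length - maxUnb S :=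
  Nat.cast_sub (maxUnb_le_length S)

theorem Unbordered.unborderedDefect_eq_zero (h : Unbordered S) : unborderedDefect S = 0 :=
  Nat.sub_eq_zero_of_le h.length_le_maxUnb

theorem unborderedDefect_append_append_le (u m v : List α) :
    unborderedDefect (u ++ m ++ v) ≤ u.length + v.length + unborderedDefect m := by
  have hmono : maxUnb m ≤ maxUnb (u ++ m ++ v) := maxUnb_mono ⟨u, v, rfl⟩
  simp only [unborderedDefect, List.length_append]
  omega

end Defect

/-! ### Counting unbordered words -/

section Words

variable {Γ : Type*} [Fintype Γ] {n k : ℕ} {S : List Γ}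

variable (Γ) in
/-- The set `Γⁿ` of strings of length `n`, as lists, so that strings of different lengths can be
concatenated and compared. -/
def words (n : ℕ) : Finset (List Γ) :=
  univ.map ⟨fun S : Fin n → Γ => List.ofFn S, List.ofFn_injective⟩

theorem mem_words : S ∈ words Γ n ↔ S.length = n := by
  constructor
  · intro hS
    obtain ⟨f, -, rfl⟩ := mem_map.1 hS
    exact List.length_ofFn
  · rintro rfl
    exact mem_map.2 ⟨S.get, mem_univ _, List.ofFn_get S⟩

variable (Γ n) in
theorem card_words : #(words Γ n) = Fintype.card Γ ^ n := by
  simp [words]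

variable (Γ) in
open Classical in
/-- The set of unbordered strings of length `k`. -/
noncomputable def unborderedWords (k : ℕ) : Finset (List Γ) := {u ∈ words Γ k | Unbordered u}

theorem mem_unborderedWords : S ∈ unborderedWords Γ k ↔ S.length = k ∧ Unbordered S := by
  simp only [unborderedWords, mem_filter, mem_words]

variable (Γ k) in
theorem card_unborderedWords_le : #(unborderedWords Γ k) ≤ Fintype.card Γ ^ k :=
  (card_le_card fun _ hu => mem_words.2 (mem_unborderedWords.1 hu).1).trans_eq (card_words Γ k)

open Classical in
theorem card_unborderedWords_add_le (hk : 2 ≤ k) :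
    #(unborderedWords Γ k) + Fintype.card Γ ^ (k - 1) ≤ Fintype.card Γ ^ k := by
  have hbordered : Fintype.card Γ ^ (k - 1) ≤ #{S ∈ words Γ k | ¬ Unbordered S} := by
    rw [← card_words]
    refine card_le_card_of_injOn (fun S => S ++ S.take 1) (fun S hS => ?_) (fun S hS T hT h => ?_)
    · have hlen := mem_words.1 hS
      have hne : S ≠ [] := List.ne_nil_of_length_pos (by omega)
      refine mem_filter.2 ⟨mem_words.2 ?_, fun hunb => ?_⟩
      · rw [List.length_append, List.length_take]
        omega
      · refine hunb 1 ?_ (hasBorder_append_take_one hne)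
        rw [List.length_append, List.length_take]
        omega
    · exact (List.append_inj h ((mem_words.1 hS).trans (mem_words.1 hT).symm)).1
  calc #(unborderedWords Γ k) + Fintype.card Γ ^ (k - 1)
      ≤ #{S ∈ words Γ k | Unbordered S} + #{S ∈ words Γ k | ¬ Unbordered S} :=
        Nat.add_le_add_left hbordered _
    _ = Fintype.card Γ ^ k := by rw [card_filter_add_card_filter_not, card_words]

theorem sum_unborderedWords_pow_unborderedDefect {R : Type*} [Semiring R] (y : R)
    (n : ℕ) :
    ∑ S ∈ unborderedWords Γ n, y ^ unborderedDefect S = #(unborderedWords Γ n) := by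
  rw [card_eq_sum_ones, Nat.cast_sum]
  refine sum_congr rfl fun S hS => ?_
  rw [(mem_unborderedWords.1 hS).2.unborderedDefect_eq_zero, pow_zero, Nat.cast_one]

end Words

/-! ### The renewal inequality -/

/-- The probability generating function `E[y^(n - L(S))]` of the defect of a uniformly random
string `S` of length `n`. -/
noncomputable def defectPGF (Γ : Type*) [Fintype Γ] {K : Type*} [Field K] (y : K)
    (n : ℕ) : K :=
  (∑ S ∈ words Γ n, y ^ unborderedDefect S) / (Fintype.card Γ : K) ^ n

section Renewal

variable {Γ : Type*} [Fintype Γ]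
variable {K : Type*} [Field K] [LinearOrder K] [IsStrictOrderedRing K]

variable (Γ) in
open Classical in
theorem filter_not_unbordered_subset_image (n : ℕ) :
    {S ∈ words Γ n | ¬ Unbordered S} ⊆
      ((Icc 1 (n / 2)).sigma fun k => unborderedWords Γ k ×ˢ words Γ (n - 2 * k)).image
        fun p => p.2.1 ++ p.2.2 ++ p.2.1 := by
  intro S hS
  obtain ⟨hlen, hbordered⟩ := mem_filter.1 hS
  obtain ⟨u, m, hne, hu, rfl⟩ := exists_eq_append_of_not_unbordered hbordered
  have hpos : 0 < u.length := List.length_pos_iff.2 hne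
  simp only [mem_words, List.length_append] at hlen
  refine mem_image.2 ⟨⟨u.length, u, m⟩, ?_, rfl⟩
  simp only [mem_sigma, mem_Icc, mem_product, mem_unborderedWords, mem_words]
  exact ⟨⟨hpos, by omega⟩, ⟨trivial, hu⟩, by omega⟩

open Classical in
theorem sum_filter_not_unbordered_le {f : List Γ → K} (hf : ∀ S, 0 ≤ f S) (n : ℕ) :
    ∑ S ∈ words Γ n with ¬ Unbordered S, f S ≤
      ∑ k ∈ Icc 1 (n / 2), ∑ u ∈ unborderedWords Γ k, ∑ m ∈ words Γ (n - 2 * k),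
        f (u ++ m ++ u) := by
  calc ∑ S ∈ words Γ n with ¬ Unbordered S, f S
      ≤ ∑ S ∈ ((Icc 1 (n / 2)).sigma fun k => unborderedWords Γ k ×ˢ words Γ (n - 2 * k)).image
          fun p => p.2.1 ++ p.2.2 ++ p.2.1, f S :=
        sum_le_sum_of_subset_of_nonneg (filter_not_unbordered_subset_image Γ n) fun S _ _ => hf S
    _ ≤ ∑ p ∈ (Icc 1 (n / 2)).sigma fun k => unborderedWords Γ k ×ˢ words Γ (n - 2 * k),
          f (p.2.1 ++ p.2.2 ++ p.2.1) :=
        sum_image_le_of_nonneg fun S _ => hf S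
    _ = _ := by simp only [sum_sigma, sum_product]

theorem sum_pow_unborderedDefect_le {y : K} (hy : 1 ≤ y) (n : ℕ) :
    ∑ S ∈ words Γ n, y ^ unborderedDefect S ≤ (Fintype.card Γ : K) ^ n +
      ∑ k ∈ Icc 1 (n / 2), #(unborderedWords Γ k) *
        ((y ^ 2) ^ k * ∑ m ∈ words Γ (n - 2 * k), y ^ unborderedDefect m) := by
  classical
  have hy0 : 0 ≤ y := zero_le_one.trans hy
  have hterm : ∀ k, ∀ u ∈ unborderedWords Γ k, ∀ m,
      y ^ unborderedDefect (u ++ m ++ u) ≤ (y ^ 2) ^ k * y ^ unborderedDefect m := by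
    intro k u hu m
    obtain rfl : u.length = k := (mem_unborderedWords.1 hu).1
    rw [← pow_mul, ← pow_add, two_mul]
    exact pow_le_pow_right₀ hy (unborderedDefect_append_append_le u m u)
  have hunbordered :
      ∑ S ∈ words Γ n with Unbordered S, y ^ unborderedDefect S ≤ (Fintype.card Γ : K) ^ n := by
    calc ∑ S ∈ words Γ n with Unbordered S, y ^ unborderedDefect S
        = #(unborderedWords Γ n) := sum_unborderedWords_pow_unborderedDefect y n
      _ ≤ (Fintype.card Γ : K) ^ n := mod_cast card_unborderedWords_le Γ n
  have hbordered : ∑ S ∈ words Γ n with ¬ Unbordered S, y ^ unborderedDefect S ≤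
      ∑ k ∈ Icc 1 (n / 2), #(unborderedWords Γ k) *
        ((y ^ 2) ^ k * ∑ m ∈ words Γ (n - 2 * k), y ^ unborderedDefect m) := by
    refine (sum_filter_not_unbordered_le (fun S => pow_nonneg hy0 _) n).trans
      (sum_le_sum fun k _ => ?_)
    calc ∑ u ∈ unborderedWords Γ k, ∑ m ∈ words Γ (n - 2 * k), y ^ unborderedDefect (u ++ m ++ u)
        ≤ ∑ _u ∈ unborderedWords Γ k, ∑ m ∈ words Γ (n - 2 * k),
            (y ^ 2) ^ k * y ^ unborderedDefect m :=
          sum_le_sum fun u hu => sum_le_sum fun m _ => hterm k u hu m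
      _ = _ := by rw [sum_const, nsmul_eq_mul, ← mul_sum]
  rw [← sum_filter_add_sum_filter_not (words Γ n) Unbordered]
  exact add_le_add hunbordered hbordered

theorem defectPGF_le_one_add_sum [Nonempty Γ] {y : K} (hy : 1 ≤ y) (n : ℕ) :
    defectPGF Γ y n ≤ 1 + ∑ k ∈ Icc 1 (n / 2),
      #(unborderedWords Γ k) * (y ^ 2 / (Fintype.card Γ : K) ^ 2) ^ k *
        defectPGF Γ y (n - 2 * k) := by
  have hs : (0 : K) < Fintype.card Γ := mod_cast Fintype.card_pos
  rw [defectPGF, div_le_iff₀ (pow_pos hs n)]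
  refine (sum_pow_unborderedDefect_le hy n).trans_eq ?_
  rw [add_mul, one_mul, sum_mul]
  congr 1
  refine sum_congr rfl fun k hk => ?_
  have hsplit : (Fintype.card Γ : K) ^ n =
      ((Fintype.card Γ : K) ^ 2) ^ k * (Fintype.card Γ : K) ^ (n - 2 * k) := by
    have := (mem_Icc.1 hk).2
    rw [← pow_mul, ← pow_add]
    congr 1
    omega
  rw [defectPGF, hsplit, div_pow]
  field_simp

theorem le_inv_one_sub_of_le_one_add_sum {a w : ℕ → K} {q : K} (hw : ∀ k, 0 ≤ w k)
    (hwq : ∀ N, ∑ k ∈ Icc 1 N, w k ≤ q) (hq : q < 1)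
    (ha : ∀ n, a n ≤ 1 + ∑ k ∈ Icc 1 (n / 2), w k * a (n - 2 * k)) (n : ℕ) :
    a n ≤ (1 - q)⁻¹ := by
  have hq' : 0 < 1 - q := sub_pos.2 hq
  induction n using Nat.strong_induction_on with
  | _ n ih =>
    calc a n ≤ 1 + ∑ k ∈ Icc 1 (n / 2), w k * a (n - 2 * k) := ha n
      _ ≤ 1 + ∑ k ∈ Icc 1 (n / 2), w k * (1 - q)⁻¹ := by
          gcongr with k hk
          · exact hw k
          · have := mem_Icc.1 hk
            exact ih _ (by omega)
      _ ≤ 1 + q * (1 - q)⁻¹ := by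
          rw [← sum_mul]
          gcongr
          exact hwq _
      _ = (1 - q)⁻¹ := by linear_combination -mul_inv_cancel₀ hq'.ne'

end Renewal

/-! ### The geometric series and the constant -/

section Constant

variable {Γ : Type*} [Fintype Γ]
variable {K : Type*} [Field K] [LinearOrder K] [IsStrictOrderedRing K]

theorem card_unborderedWords_div_le [Nonempty Γ] {k : ℕ} (hk : 1 ≤ k) :
    (#(unborderedWords Γ k) : K) / (Fintype.card Γ : K) ^ k ≤
      1 - 1 / Fintype.card Γ + if k = 1 then 1 / (Fintype.card Γ : K) else 0 := by
  have hs : (0 : K) < Fintype.card Γ := mod_cast Fintype.card_pos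
  rw [div_le_iff₀ (pow_pos hs k)]
  split_ifs with h1
  · have hcard : (#(unborderedWords Γ k) : K) ≤ (Fintype.card Γ : K) ^ k :=
      mod_cast card_unborderedWords_le Γ k
    rwa [sub_add_cancel, one_mul]
  · have hcard : (#(unborderedWords Γ k) : K) + (Fintype.card Γ : K) ^ (k - 1) ≤
        (Fintype.card Γ : K) ^ k := mod_cast card_unborderedWords_add_le (by omega)
    have hpow : 1 / (Fintype.card Γ : K) * (Fintype.card Γ : K) ^ k =
        (Fintype.card Γ : K) ^ (k - 1) := by
      rw [← mul_pow_sub_one (by omega : k ≠ 0)]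
      field_simp
    rw [add_zero, sub_mul, one_mul, hpow]
    linarith

theorem sum_card_unborderedWords_mul_pow_le {x : K} (hx : 0 ≤ x) (hxs : x < Fintype.card Γ)
    (N : ℕ) :
    ∑ k ∈ Icc 1 N, #(unborderedWords Γ k) * (x / (Fintype.card Γ : K) ^ 2) ^ k ≤
      x * ((Fintype.card Γ : K) ^ 2 - x) /
        ((Fintype.card Γ : K) ^ 2 * (Fintype.card Γ - x)) := by
  have hs : (0 : K) < Fintype.card Γ := hx.trans_lt hxs
  have : Nonempty Γ := Fintype.card_pos_iff.1 (mod_cast hs)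
  have hs1 : (1 : K) ≤ Fintype.card Γ := mod_cast Fintype.card_pos (α := Γ)
  set s : K := (Fintype.card Γ : K)
  have hr0 : 0 ≤ x / s := div_nonneg hx hs.le
  have hr1 : x / s < 1 := (div_lt_one hs).2 hxs
  have hs' : 0 ≤ 1 - 1 / s := sub_nonneg.2 ((div_le_one hs).2 hs1)
  have hsx : s - x ≠ 0 := (sub_pos.2 hxs).ne'
  calc ∑ k ∈ Icc 1 N, #(unborderedWords Γ k) * (x / s ^ 2) ^ k
      = ∑ k ∈ Icc 1 N, #(unborderedWords Γ k) / s ^ k * (x / s) ^ k := by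
        refine sum_congr rfl fun k _ => ?_
        rw [div_pow, div_pow, ← pow_mul, two_mul, pow_add]
        field_simp
    _ ≤ ∑ k ∈ Icc 1 N, (1 - 1 / s + if k = 1 then 1 / s else 0) * (x / s) ^ k :=
        sum_le_sum fun k hk => mul_le_mul_of_nonneg_right
          (card_unborderedWords_div_le (mem_Icc.1 hk).1) (pow_nonneg hr0 k)
    _ = (1 - 1 / s) * ∑ k ∈ Ico 1 (N + 1), (x / s) ^ k +
          ∑ k ∈ Icc 1 N, if k = 1 then 1 / s * (x / s) else 0 := by
        rw [Ico_add_one_right_eq_Icc, mul_sum, ← sum_add_distrib]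
        refine sum_congr rfl fun k _ => ?_
        split_ifs with h1
        · rw [h1]; ring
        · ring
    _ ≤ (1 - 1 / s) * ((x / s) ^ 1 / (1 - x / s)) + 1 / s * (x / s) := by
        gcongr
        · exact geom_sum_Ico_le_of_lt_one hr0 hr1
        · rw [sum_ite_eq']
          split_ifs
          · exact le_rfl
          · positivity
    _ = x * (s ^ 2 - x) / (s ^ 2 * (s - x)) := by
        have : 1 - x / s = (s - x) / s := by field_simp
        rw [this]
        field_simp
        ring

theorem defectPGF_le {y : K} (hy : 1 ≤ y) (hys : y ^ 2 < Fintype.card Γ)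
    (hden : 0 < (Fintype.card Γ : K) ^ 3 - 2 * (Fintype.card Γ : K) ^ 2 * y ^ 2 + y ^ 4) (n : ℕ) :
    defectPGF Γ y n ≤ ((Fintype.card Γ : K) ^ 3 - (Fintype.card Γ : K) ^ 2 * y ^ 2) /
      ((Fintype.card Γ : K) ^ 3 - 2 * (Fintype.card Γ : K) ^ 2 * y ^ 2 + y ^ 4) := by
  have hs : (0 : K) < Fintype.card Γ := (sq_nonneg y).trans_lt hys
  have : Nonempty Γ := Fintype.card_pos_iff.1 (mod_cast hs)
  have hweights := sum_card_unborderedWords_mul_pow_le (Γ := Γ) (sq_nonneg y) hys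
  have hrenewal := defectPGF_le_one_add_sum (Γ := Γ) hy
  set s : K := (Fintype.card Γ : K)
  have hsy : 0 < s - y ^ 2 := sub_pos.2 hys
  have hgap : 1 - y ^ 2 * (s ^ 2 - y ^ 2) / (s ^ 2 * (s - y ^ 2)) =
      (s ^ 3 - 2 * s ^ 2 * y ^ 2 + y ^ 4) / (s ^ 3 - s ^ 2 * y ^ 2) := by
    have : s ^ 3 - s ^ 2 * y ^ 2 = s ^ 2 * (s - y ^ 2) := by ring
    rw [this]
    field_simp
    ring
  have hnum : 0 < s ^ 3 - s ^ 2 * y ^ 2 := by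
    have := mul_pos (pow_pos hs 2) hsy
    linarith
  have hq : y ^ 2 * (s ^ 2 - y ^ 2) / (s ^ 2 * (s - y ^ 2)) < 1 :=
    sub_pos.1 (hgap ▸ div_pos hden hnum)
  rw [← inv_div, ← hgap]
  exact le_inv_one_sub_of_le_one_add_sum (fun k => by positivity) hweights hq hrenewal n

end Constant

/-! ### The moment generating function -/

theorem sum_exp_mul_div_eq_defectPGF (Γ : Type*) [Fintype Γ] (n : ℕ) (t : ℝ) :
    (∑ S : Fin n → Γ, Real.exp (t * ((n : ℝ) - (maxUnb (List.ofFn S) : ℝ)))) /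
        (Fintype.card Γ : ℝ) ^ n = defectPGF Γ (Real.exp t) n := by
  rw [defectPGF, words, sum_map]
  congr 1
  refine sum_congr rfl fun S _ => ?_
  rw [Function.Embedding.coeFn_mk, ← Real.exp_nat_mul, cast_unborderedDefect, List.length_ofFn,
    mul_comm]

theorem mgf_bound_general (Γ : Type*) [Fintype Γ] (n : ℕ) {t : ℝ} (ht : 0 ≤ t)
    (hlt : Real.exp (2 * t) < Fintype.card Γ)
    (hden : 0 < (Fintype.card Γ : ℝ) ^ 3 - 2 * (Fintype.card Γ : ℝ) ^ 2 * Real.exp (2 * t) +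
      Real.exp (4 * t)) :
    (∑ S : Fin n → Γ, Real.exp (t * ((n : ℝ) - (maxUnb (List.ofFn S) : ℝ)))) /
        (Fintype.card Γ : ℝ) ^ n ≤
      ((Fintype.card Γ : ℝ) ^ 3 - (Fintype.card Γ : ℝ) ^ 2 * Real.exp (2 * t)) /
        ((Fintype.card Γ : ℝ) ^ 3 - 2 * (Fintype.card Γ : ℝ) ^ 2 * Real.exp (2 * t) +
          Real.exp (4 * t)) := by
  have h2 : Real.exp (2 * t) = Real.exp t ^ 2 := mod_cast Real.exp_nat_mul t 2
  have h4 : Real.exp (4 * t) = Real.exp t ^ 4 := mod_cast Real.exp_nat_mul t 4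
  rw [h2] at hlt
  rw [h2, h4] at hden ⊢
  rw [sum_exp_mul_div_eq_defectPGF]
  exact defectPGF_le (Real.one_le_exp ht) hlt hden n

-- The tangent to `x ↦ x⁵` at `9/8` is tight enough: for `s = 2`, the bound `23/20` still lies
-- between `2^(1/5) ≈ 1.149` and the zero `4 - 2√2 ≈ 1.172` of the denominator of `C`.
theorem le_div_add_of_pow_five_le {x s : ℝ} (hx : 0 ≤ x) (h : x ^ 5 ≤ s) :
    x ≤ s / 8 + 9 / 10 := by
  have hbernoulli : 1 + (5 : ℕ) * (x / (9 / 8) - 1) ≤ (x / (9 / 8)) ^ 5 :=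
    one_add_mul_sub_le_pow (by linarith [div_nonneg hx (by norm_num : (0 : ℝ) ≤ 9 / 8)]) 5
  norm_num [div_pow] at hbernoulli
  linarith [pow_nonneg hx 5]

theorem mgf_denominator_pos {x s : ℝ} (hs : 2 ≤ s) (hx : x ≤ s / 8 + 9 / 10) :
    0 < s ^ 3 - 2 * s ^ 2 * x + x ^ 2 := by
  set b := s / 8 + 9 / 10 with hb
  have hendpoint : 0 < s ^ 3 - 2 * s ^ 2 * b + b ^ 2 := by
    rw [hb]
    nlinarith [mul_nonneg (sub_nonneg.2 hs) (sub_nonneg.2 hs)]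
  have hdecreasing : 0 ≤ (b - x) * (2 * s ^ 2 - b - x) :=
    mul_nonneg (sub_nonneg.2 hx) (by nlinarith)
  linarith

theorem exp_two_mul_le {s t : ℝ} (hs : 2 ≤ s) (ht : t ≤ 0.1 * Real.log s) :
    Real.exp (2 * t) ≤ s / 8 + 9 / 10 := by
  refine le_div_add_of_pow_five_le (Real.exp_pos _).le ?_
  rw [← Real.exp_nat_mul, ← Real.le_log_iff_exp_le (by linarith)]
  push_cast
  linarith

/-- Lemma 1 of the paper: for a uniformly random `S ∈ Σⁿ` over an alphabet of
size `σ ≥ 2` and `0 ≤ t ≤ 0.1 ln σ`, the moment-generating function of `n - L(S)` is at most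
`C(t) = (σ³ - σ²e^{2t}) / (σ³ - 2σ²e^{2t} + e^{4t})`. -/
theorem mgf_bound (σ : ℕ) (hσ : 2 ≤ σ) (Γ : Type) [Fintype Γ]
    (hcard : Fintype.card Γ = σ) (n : ℕ) (t : ℝ)
    (ht0 : 0 ≤ t) (ht1 : t ≤ 0.1 * Real.log σ) :
    (∑ S : Fin n → Γ, Real.exp (t * ((n : ℝ) - (maxUnb (List.ofFn S) : ℝ)))) / (σ : ℝ) ^ n ≤
      ((σ : ℝ) ^ 3 - (σ : ℝ) ^ 2 * Real.exp (2 * t)) /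
        ((σ : ℝ) ^ 3 - 2 * (σ : ℝ) ^ 2 * Real.exp (2 * t) + Real.exp (4 * t)) := by
  subst hcard
  have hs : (2 : ℝ) ≤ Fintype.card Γ := mod_cast hσ
  have hexp : Real.exp (2 * t) ≤ (Fintype.card Γ : ℝ) / 8 + 9 / 10 := exp_two_mul_le hs ht1
  have h4 : Real.exp (4 * t) = Real.exp (2 * t) ^ 2 := by
    rw [← Real.exp_nat_mul]
    ring_nf
  exact mgf_bound_general Γ n ht0 (by linarith) (h4 ▸ mgf_denominator_pos hs hexp)
end

section
/- There exists an absolute constant c > 0 such that for every alphabet Σ of size σ ≥ 2 and every n ∈ ℕ, if S ∈ Σⁿ is chosen uniformly at random, then E[n − L(S)] ≤ c/σ. Equivalently, E[L(S)] = n − O(σ^{-1}). -/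
/-! Write `x = 1 / σ`. A factor of length greater than `ℓ` at fixed positions of the random word has
a border of length `ℓ` with probability at most `x ^ ℓ`, because such a border determines the last
`ℓ` letters of the factor one after the other.

If `n - L(S) > 2m(m + 1)`, then each of the `m + 1` concentric factors `S[km, n - km)`, `k ≤ m`, has
a proper border. One of them has a border longer than `m` with probability at most
`(m + 1) x ^ (m + 1) / (1 - x)`. Otherwise all of them have borders of length at most `m`; these
`m + 1` events involve disjoint sets of positions, hence are independent. Each has probability at
most `x + x ^ 2`: a border of length `1` costs `x`, and in its absence a border of length `ℓ ≥ 2`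
has distinct first and last letters, which lowers its probability to `(1 - x) x ^ ℓ`; the sum over
`ℓ ≥ 2` is at most `x ^ 2`.

Since `x + x ^ 2 ≤ 3 / 4`, the probability that `n - L(S) > 2m(m + 1)` is `x` times a bound that
decays geometrically in `m`, and summing over `m`, weighted by the gaps `4(m + 1)` between
consecutive thresholds, bounds the expectation. -/

open Finset

/-- The probability of the event `P` under the uniform distribution on the finite type `Ω`; it is
`0` when `Ω` is empty. -/
noncomputable def prob {Ω : Type*} [Fintype Ω] (P : Ω → Prop) : ℝ :=
  open Classical in (({ω | P ω} : Finset Ω).dens : ℝ)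

/-- The factor `S[i, n - i)` (0-based, half-open) has a border of length `ℓ`, where `2 * i + ℓ ≤ n`:
its `k`-th letter agrees with the letter `n - 2 * i - ℓ` places to the right whenever `k < ℓ`. -/
def CentralBorder {Γ : Type*} {n : ℕ} (S : Fin n → Γ) (i ℓ : ℕ) : Prop :=
  ∀ a b : Fin n, i ≤ a → a < i + ℓ → b + (2 * i + ℓ) = a + n → S a = S b

/-- The positions at distance at least `i` and less than `i + m` from one of the two ends of a word
of length `n`; they carry all borders of length at most `m` of its factor `[i, n - i)`. -/
def outerBlocks (n i m : ℕ) : Set (Fin n) :=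
  {p | (i ≤ p ∧ p < i + m) ∨ (p + i < n ∧ n ≤ p + (i + m))}

section Probability

variable {Ω κ : Type*} [Fintype Ω] {P Q : Ω → Prop}

lemma prob_eq_dens (P : Ω → Prop) [DecidablePred P] :
    prob P = (({ω | P ω} : Finset Ω).dens : ℝ) := by
  unfold prob
  congr!

lemma prob_eq_card_div (P : Ω → Prop) [DecidablePred P] :
    prob P = #{ω | P ω} / (Fintype.card Ω : ℝ) := by
  rw [prob_eq_dens, nnratCast_dens]

lemma prob_nonneg (P : Ω → Prop) : 0 ≤ prob P :=
  NNRat.cast_nonneg _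

lemma prob_le_one (P : Ω → Prop) : prob P ≤ 1 := by
  classical
  rw [prob_eq_dens]
  exact_mod_cast dens_le_one

lemma prob_mono (h : ∀ ω, P ω → Q ω) : prob P ≤ prob Q := by
  classical
  rw [prob_eq_dens, prob_eq_dens]
  exact_mod_cast dens_le_dens (monotone_filter_right univ fun ω _ => h ω)

lemma prob_or_le (P Q : Ω → Prop) : prob (fun ω => P ω ∨ Q ω) ≤ prob P + prob Q := by
  classical
  simp only [prob_eq_dens, filter_or]
  exact_mod_cast dens_union_le _ _

lemma prob_exists_mem_le (s : Finset κ) (P : κ → Ω → Prop) :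
    prob (fun ω => ∃ k ∈ s, P k ω) ≤ ∑ k ∈ s, prob (P k) := by
  classical
  have h : ({ω | ∃ k ∈ s, P k ω} : Finset Ω) = s.biUnion fun k => {ω | P k ω} := by
    ext ω
    simp only [mem_filter, mem_univ, true_and, mem_biUnion]
  simp only [prob_eq_dens, h]
  exact_mod_cast dens_biUnion_le

lemma prob_not_le (P : Ω → Prop) : prob (fun ω => ¬ P ω) ≤ 1 - prob P := by
  classical
  have h := dens_filter_add_dens_filter_not_eq_dens (s := univ) P
  rw [le_sub_iff_add_le', prob_eq_dens, prob_eq_dens]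
  exact_mod_cast h.trans_le dens_le_one

lemma min_le_sum_layers (t : ℕ → ℝ) (ht : t 0 ≤ 0) (x : ℝ) (N : ℕ) :
    min x (t N) ≤ ∑ m ∈ range N, if t m < x then t (m + 1) - t m else 0 := by
  induction N with
  | zero => simpa using Or.inr ht
  | succ N ih =>
    rw [sum_range_succ]
    split_ifs with h
    · rw [min_eq_right h.le] at ih
      linarith [min_le_right x (t (N + 1))]
    · rw [min_eq_left (not_lt.1 h)] at ih
      linarith [min_le_left x (t (N + 1))]

lemma average_le_sum_layers (X : Ω → ℝ) (t : ℕ → ℝ) (ht : t 0 ≤ 0) (N : ℕ)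
    (hX : ∀ ω, X ω ≤ t N) :
    (∑ ω, X ω) / Fintype.card Ω ≤
      ∑ m ∈ range N, (t (m + 1) - t m) * prob (fun ω => t m < X ω) := by
  classical
  calc (∑ ω, X ω) / Fintype.card Ω
      ≤ (∑ ω, ∑ m ∈ range N, if t m < X ω then t (m + 1) - t m else 0) / Fintype.card Ω := by
        gcongr with ω
        exact (min_eq_left (hX ω)).ge.trans (min_le_sum_layers t ht (X ω) N)
    _ = ∑ m ∈ range N, (t (m + 1) - t m) * prob (fun ω => t m < X ω) := by
        rw [sum_comm, sum_div]
        refine sum_congr rfl fun m _ => ?_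
        rw [← sum_filter, sum_const, nsmul_eq_mul, prob_eq_card_div]
        ring

end Probability

section ProductSpace

variable {ι κ : Type*} [Fintype ι] [DecidableEq ι] {α : ι → Type*} [∀ i, Fintype (α i)]

/-- Exchanging the coordinates outside `s` is a bijection from `P × Q` to `(P ∧ Q) × univ`. -/
lemma prob_and_of_dependsOn {P Q : (∀ i, α i) → Prop} {s : Set ι}
    (hP : DependsOn P s) (hQ : DependsOn Q sᶜ) :
    prob (fun f => P f ∧ Q f) = prob P * prob Q := by
  classical
  let swap (p : (∀ i, α i) × (∀ i, α i)) := (s.piecewise p.1 p.2, s.piecewise p.2 p.1)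
  have swap_swap (p) : swap (swap p) = p := by
    ext i <;> by_cases hi : i ∈ s <;> simp [swap, hi]
  have hP' (f g) : P (s.piecewise f g) ↔ P f :=
    (hP fun i hi => s.piecewise_eq_of_mem f g hi).to_iff
  have hQ' (f g) : Q (s.piecewise f g) ↔ Q g :=
    (hQ fun i hi => s.piecewise_eq_of_notMem f g hi).to_iff
  have hcard : #{f | P f ∧ Q f} * Fintype.card (∀ i, α i) = #{f | P f} * #{f | Q f} := by
    rw [← card_univ, ← card_product, ← card_product]
    refine card_nbij' swap swap ?_ ?_ (fun p _ => swap_swap p) (fun p _ => swap_swap p)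
    · rintro ⟨f, g⟩ h
      simp_all [swap]
    · rintro ⟨f, g⟩ h
      simp_all [swap]
  simp only [prob_eq_card_div]
  rw [div_mul_div_comm, ← Nat.cast_mul, ← hcard, Nat.cast_mul, mul_div_mul_comm]
  rcases eq_or_ne (Fintype.card (∀ i, α i) : ℝ) 0 with h | h
  · simp only [h, div_zero, zero_mul]
  · rw [div_self h, mul_one]

lemma prob_forall_mem_of_dependsOn [∀ i, Nonempty (α i)] (s : Finset κ)
    {P : κ → (∀ i, α i) → Prop} {B : κ → Set ι} (hP : ∀ k ∈ s, DependsOn (P k) (B k))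
    (hB : (s : Set κ).PairwiseDisjoint B) :
    prob (fun f => ∀ k ∈ s, P k f) = ∏ k ∈ s, prob (P k) := by
  classical
  induction s using Finset.induction_on with
  | empty => simp [prob_eq_dens]
  | insert a s ha ih =>
    simp only [forall_mem_insert] at hP ⊢
    rw [coe_insert, Set.pairwiseDisjoint_insert_of_notMem (by simpa using ha)] at hB
    have hs : DependsOn (fun f => ∀ k ∈ s, P k f) (B a)ᶜ := fun f g hfg =>
      propext <| forall₂_congr fun k hk =>
        (hP.2 k hk fun i hi => hfg i (Set.disjoint_right.1 (hB.2 k hk) hi)).to_iff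
    rw [prod_insert ha, prob_and_of_dependsOn hP.1 hs, ih hP.2 hB.1]

/-- Overwriting the coordinates in `D` arbitrarily is injective on `P` and stays inside `Q`. -/
lemma prob_le_prob_mul_prod_of_determined [Preorder ι] [∀ i, Nonempty (α i)]
    {P Q : (∀ i, α i) → Prop} {D : Finset ι} (hPQ : ∀ f, P f → Q f)
    (hQ : DependsOn Q (D : Set ι)ᶜ)
    (hD : ∀ f g, P f → P g → ∀ i ∈ D, (∀ j < i, f j = g j) → f i = g i) :
    prob P ≤ prob Q * ∏ i ∈ D, (Fintype.card (α i) : ℝ)⁻¹ := by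
  classical
  have hQ' (f y) (hf : P f) : Q (Function.updateFinset f D y) :=
    (hQ fun i hi => dif_neg hi).mpr (hPQ f hf)
  let overwrite (p : {f // P f} × (∀ i : D, α i)) : {f // Q f} := ⟨_, hQ' p.1 p.2 p.1.2⟩
  have hinj : Function.Injective overwrite := by
    rintro ⟨⟨f, hf⟩, y⟩ ⟨⟨g, hg⟩, z⟩ h
    have h' (i) : Function.updateFinset f D y i = Function.updateFinset g D z i :=
      congrFun (congrArg Subtype.val h) i
    have hyz : y = z := funext fun i => by simpa [Function.updateFinset] using h' i
    have hfg : f = g := funext fun i => by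
      induction i using WellFoundedLT.induction with
      | ind i ih =>
        by_cases hi : i ∈ D
        · exact hD f g hf hg i hi ih
        · simpa [Function.updateFinset, hi] using h' i
    subst hfg hyz
    rfl
  have hcard : #{f | P f} * ∏ i ∈ D, Fintype.card (α i) ≤ #{f | Q f} := by
    simpa only [Fintype.card_prod, Fintype.card_pi, Fintype.card_subtype,
      prod_coe_sort D fun i => Fintype.card (α i)] using Fintype.card_le_of_injective _ hinj
  have hpos : 0 < ∏ i ∈ D, (Fintype.card (α i) : ℝ) :=
    prod_pos fun i _ => Nat.cast_pos.2 Fintype.card_pos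
  rw [prod_inv_distrib, ← div_eq_mul_inv, le_div_iff₀ hpos, prob_eq_card_div, prob_eq_card_div,
    div_mul_eq_mul_div]
  gcongr
  exact_mod_cast hcard

lemma inv_card_le_prob_apply_eq_apply {α : Type*} [Fintype α] [Nonempty α] {i j : ι}
    (hij : i ≠ j) : (Fintype.card α : ℝ)⁻¹ ≤ prob (fun f : ι → α => f i = f j) := by
  classical
  let split (f : ι → α) : {f : ι → α // f i = f j} × α :=
    (⟨Function.update f j (f i), by simp [hij]⟩, f j)
  have hinj : Function.Injective split := fun f g h => by
    simp only [split, Prod.mk.injEq, Subtype.mk.injEq] at h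
    rw [← Function.update_eq_self j f, ← Function.update_eq_self j g, h.2,
      ← Function.update_idem (f i) (g j) f, h.1, Function.update_idem]
  have hcard : Fintype.card (ι → α) ≤ #{f : ι → α | f i = f j} * Fintype.card α := by
    simpa only [Fintype.card_prod, Fintype.card_subtype] using Fintype.card_le_of_injective _ hinj
  rw [prob_eq_card_div, inv_le_iff_one_le_mul₀ (Nat.cast_pos.2 Fintype.card_pos),
    div_mul_eq_mul_div, one_le_div (Nat.cast_pos.2 Fintype.card_pos)]
  exact_mod_cast hcard

end ProductSpace

section Border

variable {Γ : Type*} {n : ℕ}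

lemma dependsOn_centralBorder {i ℓ m : ℕ} (hℓ : ℓ ≤ m) :
    DependsOn (fun S : Fin n → Γ => CentralBorder S i ℓ) (outerBlocks n i m) := by
  refine fun S T hST => propext <| forall₅_congr fun a b ha haℓ hab => ?_
  rw [hST a (Or.inl ⟨ha, by omega⟩), hST b (Or.inr ⟨by omega, by omega⟩)]

lemma pairwiseDisjoint_outerBlocks {m r : ℕ} (h : 2 * (r * m) ≤ n) :
    (range r : Set ℕ).PairwiseDisjoint fun k => outerBlocks n (k * m) m := by
  have hlt {k k' : ℕ} (hkk' : k < k') (hk' : k' < r) :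
      Disjoint (outerBlocks n (k * m) m) (outerBlocks n (k' * m) m) := by
    have h1 : k * m + m ≤ k' * m := by nlinarith
    have h2 : k' * m + m ≤ r * m := by nlinarith
    refine Set.disjoint_left.2 fun p hp hp' => ?_
    simp only [outerBlocks, Set.mem_ofPred_eq] at hp hp'
    omega
  intro k hk k' hk' hne
  rcases hne.lt_or_gt with hlt' | hlt'
  · exact hlt hlt' (mem_range.1 hk')
  · exact (hlt hlt' (mem_range.1 hk)).symm

lemma length_le_maxUnb {α : Type*} {S T : List α} (hne : T ≠ []) (hTS : T <:+: S)
    (hT : Unbordered T) : T.length ≤ maxUnb S := by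
  refine le_csSup ⟨S.length, ?_⟩ ⟨T, hne, hTS, hT, rfl⟩
  rintro _ ⟨U, -, hU, -, rfl⟩
  exact hU.length_le

lemma exists_hasBorder_of_maxUnb_lt_length {α : Type*} {S T : List α} (hTS : T <:+: S)
    (hlt : maxUnb S < T.length) : ∃ ℓ < T.length, HasBorder T ℓ := by
  by_contra! h
  exact hlt.not_ge (length_le_maxUnb (List.ne_nil_of_length_pos (by omega)) hTS h)

lemma centralBorder_of_hasBorder {S : Fin n → Γ} {i ℓ : ℕ} (hi : 2 * i ≤ n)
    (h : HasBorder (((List.ofFn S).drop i).take (n - 2 * i)) ℓ) : CentralBorder S i ℓ := by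
  obtain ⟨-, hℓ, h⟩ := h
  intro a b ha haℓ hab
  have hlen : (((List.ofFn S).drop i).take (n - 2 * i)).length = n - 2 * i := by
    simp only [List.length_take, List.length_drop, List.length_ofFn]
    omega
  rw [hlen] at hℓ h
  have hletter := congrArg (fun l : List Γ => l[a - i]?) h
  simp only [List.getElem?_take, List.getElem?_drop, List.getElem?_ofFn] at hletter
  have ha' : i + (a - i) = a := by omega
  have hb' : i + (n - 2 * i - ℓ + (a - i)) = b := by omega
  rw [if_pos (by omega), if_pos (by omega), if_pos (by omega), ha', hb'] at hletter
  simpa using hletter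

lemma exists_centralBorder_of_maxUnb_lt {S : Fin n → Γ} {i : ℕ}
    (h : maxUnb (List.ofFn S) + 2 * i < n) :
    ∃ ℓ ∈ Ico 1 (n - 2 * i), CentralBorder S i ℓ := by
  set T := ((List.ofFn S).drop i).take (n - 2 * i) with hT
  have hlen : T.length = n - 2 * i := by
    simp only [hT, List.length_take, List.length_drop, List.length_ofFn]
    omega
  obtain ⟨ℓ, hℓ, hborder⟩ := exists_hasBorder_of_maxUnb_lt_length (S := List.ofFn S) (T := T)
    ((List.take_prefix _ _).isInfix.trans (List.drop_suffix _ _).isInfix) (by omega)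
  exact ⟨ℓ, mem_Ico.2 ⟨hborder.1, by omega⟩, centralBorder_of_hasBorder (by omega) hborder⟩

variable [Fintype Γ]

lemma prob_and_centralBorder_le [Nonempty Γ] {i ℓ : ℕ} (h : 2 * i + ℓ < n)
    {Q : (Fin n → Γ) → Prop} (hQ : DependsOn Q {p | p + (i + ℓ) < n}) :
    prob (fun S => Q S ∧ CentralBorder S i ℓ) ≤ prob Q * (Fintype.card Γ : ℝ)⁻¹ ^ ℓ := by
  -- The last `ℓ` positions of the factor: the border determines their letters from left to right.
  let D : Finset (Fin n) := (Ico (n - (i + ℓ)) (n - i)).attachFin fun p hp => by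
    have := mem_Ico.1 hp
    omega
  have hcard : #D = ℓ := by
    rw [card_attachFin, Nat.card_Ico]
    omega
  have hdet : ∀ S T : Fin n → Γ, Q S ∧ CentralBorder S i ℓ → Q T ∧ CentralBorder T i ℓ →
      ∀ p ∈ D, (∀ q < p, S q = T q) → S p = T p := by
    rintro S T ⟨-, hS⟩ ⟨-, hT⟩ p hp hST
    rw [mem_attachFin, mem_Ico] at hp
    let q : Fin n := ⟨p - (n - (2 * i + ℓ)), by omega⟩
    have hpq : p + (2 * i + ℓ) = q + n := by
      simp only [q]
      omega
    rw [← hS q p (by omega) (by omega) hpq, ← hT q p (by omega) (by omega) hpq]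
    exact hST q (Fin.lt_def.2 (by omega))
  have hQD : DependsOn Q (D : Set (Fin n))ᶜ := hQ.mono fun p hp hpD => by
    have := mem_Ico.1 ((mem_attachFin _).1 hpD)
    have : p + (i + ℓ) < n := hp
    omega
  simpa only [prod_const, hcard] using
    prob_le_prob_mul_prod_of_determined (fun S hS => hS.1) hQD hdet

lemma prob_centralBorder_le [Nonempty Γ] {i ℓ : ℕ} (h : 2 * i + ℓ < n) :
    prob (fun S : Fin n → Γ => CentralBorder S i ℓ) ≤ (Fintype.card Γ : ℝ)⁻¹ ^ ℓ := by
  have hborder := prob_and_centralBorder_le h (Γ := Γ) (Q := fun _ => True) fun _ _ _ => rfl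
  simp only [true_and] at hborder
  exact hborder.trans (mul_le_of_le_one_left (by positivity) (prob_le_one _))

lemma prob_not_one_and_centralBorder_le [Nonempty Γ] {i ℓ : ℕ} (hℓ : 2 ≤ ℓ)
    (h : 2 * (i + ℓ) ≤ n) :
    prob (fun S : Fin n → Γ => ¬ CentralBorder S i 1 ∧ CentralBorder S i ℓ) ≤
      (1 - (Fintype.card Γ : ℝ)⁻¹) * (Fintype.card Γ : ℝ)⁻¹ ^ ℓ := by
  let u : Fin n := ⟨i, by omega⟩
  let v : Fin n := ⟨i + ℓ - 1, by omega⟩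
  have huv : u ≠ v := Fin.ne_of_val_ne (by simp only [u, v]; omega)
  -- The border of length `ℓ` puts the letter at `v` also at the end of the factor beginning at `u`.
  have hne (S : Fin n → Γ) (hS1 : ¬ CentralBorder S i 1) (hS : CentralBorder S i ℓ) :
      S u ≠ S v := by
    refine fun hSuv => hS1 fun a b ha ha1 hab => ?_
    obtain rfl : a = u := Fin.ext (by simp only [u]; omega)
    exact hSuv.trans (hS v b (by simp only [v]; omega) (by simp only [v]; omega)
      (by simp only [u, v] at hab ⊢; omega))
  have hdep : DependsOn (fun S : Fin n → Γ => S u ≠ S v) {p | p + (i + ℓ) < n} := by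
    intro S T hST
    have hu : S u = T u := hST u (by simp only [u, Set.mem_ofPred_eq]; omega)
    have hv : S v = T v := hST v (by simp only [v, Set.mem_ofPred_eq]; omega)
    simp only [hu, hv]
  calc prob (fun S : Fin n → Γ => ¬ CentralBorder S i 1 ∧ CentralBorder S i ℓ)
      ≤ prob (fun S : Fin n → Γ => S u ≠ S v ∧ CentralBorder S i ℓ) :=
        prob_mono fun S hS => ⟨hne S hS.1 hS.2, hS.2⟩
    _ ≤ prob (fun S : Fin n → Γ => S u ≠ S v) * (Fintype.card Γ : ℝ)⁻¹ ^ ℓ :=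
        prob_and_centralBorder_le (by omega) hdep
    _ ≤ (1 - (Fintype.card Γ : ℝ)⁻¹) * (Fintype.card Γ : ℝ)⁻¹ ^ ℓ := by
        gcongr
        exact (prob_not_le _).trans (sub_le_sub_left (inv_card_le_prob_apply_eq_apply huv) 1)

lemma prob_short_border_le [Nonempty Γ] {i m : ℕ} (h : 2 * (i + m) ≤ n) :
    prob (fun S : Fin n → Γ => ∃ ℓ ∈ Ico 1 (m + 1), CentralBorder S i ℓ) ≤
      (Fintype.card Γ : ℝ)⁻¹ + (Fintype.card Γ : ℝ)⁻¹ ^ 2 := by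
  set x : ℝ := (Fintype.card Γ : ℝ)⁻¹
  rcases m.eq_zero_or_pos with rfl | hm
  · refine (prob_exists_mem_le _ _).trans ?_
    rw [zero_add, Ico_self, sum_empty]
    positivity
  calc prob (fun S : Fin n → Γ => ∃ ℓ ∈ Ico 1 (m + 1), CentralBorder S i ℓ)
      ≤ prob (fun S : Fin n → Γ => CentralBorder S i 1 ∨
          ∃ ℓ ∈ Ico 2 (m + 1), ¬ CentralBorder S i 1 ∧ CentralBorder S i ℓ) := by
        refine prob_mono fun S ⟨ℓ, hℓ, hS⟩ => or_iff_not_imp_left.2 fun hS1 => ?_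
        rw [mem_Ico] at hℓ
        have hne : ℓ ≠ 1 := by
          rintro rfl
          exact hS1 hS
        exact ⟨ℓ, mem_Ico.2 (by omega), hS1, hS⟩
    _ ≤ x ^ 1 + ∑ ℓ ∈ Ico 2 (m + 1), (1 - x) * x ^ ℓ := by
        refine (prob_or_le _ _).trans (add_le_add (prob_centralBorder_le (by omega))
          ((prob_exists_mem_le _ _).trans (sum_le_sum fun ℓ hℓ => ?_)))
        rw [mem_Ico] at hℓ
        exact prob_not_one_and_centralBorder_le hℓ.1 (by omega)
    _ = x + (x ^ 2 - x ^ (m + 1)) := by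
        rw [pow_one, ← mul_sum, mul_comm, geom_sum_Ico_mul_neg x (by omega)]
    _ ≤ x + x ^ 2 := by
        have : 0 ≤ x ^ (m + 1) := by positivity
        linarith

lemma prob_long_border_le [Nontrivial Γ] (n i m : ℕ) :
    prob (fun S : Fin n → Γ => ∃ ℓ ∈ Ico (m + 1) (n - 2 * i), CentralBorder S i ℓ) ≤
      (Fintype.card Γ : ℝ)⁻¹ ^ (m + 1) / (1 - (Fintype.card Γ : ℝ)⁻¹) := by
  calc _ ≤ ∑ ℓ ∈ Ico (m + 1) (n - 2 * i), prob fun S : Fin n → Γ => CentralBorder S i ℓ :=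
        prob_exists_mem_le _ _
    _ ≤ ∑ ℓ ∈ Ico (m + 1) (n - 2 * i), (Fintype.card Γ : ℝ)⁻¹ ^ ℓ :=
        sum_le_sum fun ℓ hℓ => prob_centralBorder_le (by have := (mem_Ico.1 hℓ).2; omega)
    _ ≤ _ := geom_sum_Ico_le_of_lt_one (by positivity)
        (inv_lt_one_of_one_lt₀ (mod_cast Fintype.one_lt_card))

end Border

section Expectation

variable {Γ : Type*} [Fintype Γ] {n : ℕ}

lemma prob_forall_short_border_le [Nonempty Γ] {m r : ℕ} (h : 2 * (r * m) ≤ n) :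
    prob (fun S : Fin n → Γ => ∀ k ∈ range r, ∃ ℓ ∈ Ico 1 (m + 1), CentralBorder S (k * m) ℓ) ≤
      ((Fintype.card Γ : ℝ)⁻¹ + (Fintype.card Γ : ℝ)⁻¹ ^ 2) ^ r := by
  have hdep (k : ℕ) : DependsOn
      (fun S : Fin n → Γ => ∃ ℓ ∈ Ico 1 (m + 1), CentralBorder S (k * m) ℓ)
      (outerBlocks n (k * m) m) := fun S T hST =>
    propext <| exists_congr fun ℓ => and_congr_right fun hℓ =>
      (dependsOn_centralBorder (Nat.lt_succ_iff.1 (mem_Ico.1 hℓ).2) hST).to_iff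
  rw [prob_forall_mem_of_dependsOn (range r) (fun k _ => hdep k) (pairwiseDisjoint_outerBlocks h)]
  refine (prod_le_prod (fun k _ => prob_nonneg _) fun k hk => ?_).trans_eq
    ((prod_const _).trans (by rw [card_range]))
  have hkr : (k + 1) * m ≤ r * m := Nat.mul_le_mul_right m (mem_range.1 hk)
  exact prob_short_border_le (by linarith)

lemma inv_card_le_half [Nontrivial Γ] : (Fintype.card Γ : ℝ)⁻¹ ≤ 1 / 2 := by
  rw [one_div]
  exact inv_anti₀ two_pos (mod_cast Fintype.one_lt_card)

lemma prob_maxUnb_add_lt_le [Nontrivial Γ] (n m : ℕ) :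
    prob (fun S : Fin n → Γ => maxUnb (List.ofFn S) + 2 * (m * (m + 1)) < n) ≤
      (2 * m + 3) * ((Fintype.card Γ : ℝ)⁻¹ + (Fintype.card Γ : ℝ)⁻¹ ^ 2) ^ (m + 1) := by
  set x : ℝ := (Fintype.card Γ : ℝ)⁻¹
  have hx0 : 0 ≤ x := by positivity
  have hx : x ≤ 1 / 2 := inv_card_le_half
  rcases lt_or_ge n (2 * ((m + 1) * m)) with hn | hn
  · have hempty (S : Fin n → Γ) : ¬ maxUnb (List.ofFn S) + 2 * (m * (m + 1)) < n := by lia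
    simp only [prob_eq_dens, hempty, filter_false, dens_empty, NNRat.cast_zero]
    positivity
  have hlong : x ^ (m + 1) / (1 - x) ≤ 2 * (x + x ^ 2) ^ (m + 1) := by
    rw [div_le_iff₀ (by linarith)]
    have hpow : x ^ (m + 1) ≤ (x + x ^ 2) ^ (m + 1) := by
      gcongr
      exact le_add_of_nonneg_right (sq_nonneg x)
    nlinarith [pow_nonneg hx0 (m + 1)]
  calc prob (fun S : Fin n → Γ => maxUnb (List.ofFn S) + 2 * (m * (m + 1)) < n)
      ≤ prob (fun S : Fin n → Γ =>
          (∀ k ∈ range (m + 1), ∃ ℓ ∈ Ico 1 (m + 1), CentralBorder S (k * m) ℓ) ∨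
          ∃ k ∈ range (m + 1), ∃ ℓ ∈ Ico (m + 1) (n - 2 * (k * m)),
            CentralBorder S (k * m) ℓ) := by
        refine prob_mono fun S hS => or_iff_not_imp_right.2 fun hnot k hk => ?_
        have hkm : k * m ≤ m * m := Nat.mul_le_mul_right m (mem_range_succ_iff.1 hk)
        obtain ⟨ℓ, hℓ, hborder⟩ :=
          exists_centralBorder_of_maxUnb_lt (S := S) (i := k * m) (by linarith)
        rw [mem_Ico] at hℓ
        have hle : ℓ < m + 1 := by
          by_contra! hlt
          exact hnot ⟨k, hk, ℓ, mem_Ico.2 ⟨hlt, hℓ.2⟩, hborder⟩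
        exact ⟨ℓ, mem_Ico.2 ⟨hℓ.1, hle⟩, hborder⟩
    _ ≤ (x + x ^ 2) ^ (m + 1) + ∑ k ∈ range (m + 1), x ^ (m + 1) / (1 - x) :=
        (prob_or_le _ _).trans (add_le_add (prob_forall_short_border_le hn)
          ((prob_exists_mem_le _ _).trans (sum_le_sum fun k _ => prob_long_border_le n (k * m) m)))
    _ ≤ (x + x ^ 2) ^ (m + 1) + ∑ k ∈ range (m + 1), 2 * (x + x ^ 2) ^ (m + 1) := by gcongr
    _ = (2 * m + 3) * (x + x ^ 2) ^ (m + 1) := by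
        rw [sum_const, card_range, nsmul_eq_mul]
        push_cast
        ring

lemma add_sq_pow_succ_le {x : ℝ} (hx0 : 0 ≤ x) (hx : x ≤ 1 / 2) (m : ℕ) :
    (x + x ^ 2) ^ (m + 1) ≤ 3 / 2 * (3 / 4) ^ m * x :=
  calc (x + x ^ 2) ^ (m + 1) = (x + x ^ 2) ^ m * (x + x ^ 2) := pow_succ _ _
    _ ≤ (3 / 4) ^ m * (3 / 2 * x) := by
        gcongr <;> nlinarith
    _ = 3 / 2 * (3 / 4) ^ m * x := by ring

lemma prob_lt_sub_maxUnb_le [Nontrivial Γ] (n m : ℕ) :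
    prob (fun S : Fin n → Γ => 2 * ((m : ℝ) * (m + 1)) < n - maxUnb (List.ofFn S)) ≤
      (2 * m + 3) * (3 / 2 * (3 / 4) ^ m * (Fintype.card Γ : ℝ)⁻¹) := by
  refine (prob_mono fun S hS => ?_).trans ((prob_maxUnb_add_lt_le n m).trans ?_)
  · rw [lt_sub_iff_add_lt'] at hS
    exact_mod_cast hS
  · gcongr
    exact add_sq_pow_succ_le (by positivity) inv_card_le_half m

lemma hasSum_layer_bounds :
    HasSum (fun m : ℕ => 4 * ((m : ℝ) + 1) * ((2 * m + 3) * (3 / 2 * (3 / 4) ^ m))) 1440 := by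
  have hnorm : ‖(3 / 4 : ℝ)‖ < 1 := by norm_num
  have h2 := (hasSum_choose_mul_geometric_of_norm_lt_one 2 hnorm).mul_left 24
  have h1 := (hasSum_choose_mul_geometric_of_norm_lt_one 1 hnorm).mul_left 6
  have hterm (m : ℕ) : 4 * ((m : ℝ) + 1) * ((2 * m + 3) * (3 / 2 * (3 / 4) ^ m)) =
      24 * ((m + 2).choose 2 * (3 / 4) ^ m) - 6 * ((m + 1).choose 1 * (3 / 4) ^ m) := by
    rw [Nat.cast_choose_two, Nat.choose_one_right]
    push_cast
    ring
  have hvalue :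
      (1440 : ℝ) = 24 * (1 / (1 - 3 / 4) ^ (2 + 1)) - 6 * (1 / (1 - 3 / 4) ^ (1 + 1)) := by
    norm_num
  rw [funext hterm, hvalue]
  exact h2.sub h1

theorem expected_maxUnbordered_general (hΓ : 2 ≤ Fintype.card Γ) (n : ℕ) :
    (∑ S : Fin n → Γ, ((n : ℝ) - maxUnb (List.ofFn S))) / (Fintype.card Γ : ℝ) ^ n ≤
      1440 / Fintype.card Γ := by
  have : Nontrivial Γ := Fintype.one_lt_card_iff_nontrivial.1 hΓ
  set x : ℝ := (Fintype.card Γ : ℝ)⁻¹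
  let t (m : ℕ) : ℝ := 2 * (m * (m + 1))
  calc (∑ S : Fin n → Γ, ((n : ℝ) - maxUnb (List.ofFn S))) / (Fintype.card Γ : ℝ) ^ n
      = (∑ S : Fin n → Γ, ((n : ℝ) - maxUnb (List.ofFn S))) / Fintype.card (Fin n → Γ) := by
        rw [Fintype.card_fun, Fintype.card_fin, Nat.cast_pow]
    _ ≤ ∑ m ∈ range n, (t (m + 1) - t m) *
          prob (fun S : Fin n → Γ => t m < n - maxUnb (List.ofFn S)) := by
        refine average_le_sum_layers _ t (by simp [t]) n fun S => ?_
        simp only [t]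
        nlinarith [Nat.cast_nonneg (α := ℝ) n, Nat.cast_nonneg (α := ℝ) (maxUnb (List.ofFn S))]
    _ ≤ ∑ m ∈ range n, 4 * ((m : ℝ) + 1) * ((2 * m + 3) * (3 / 2 * (3 / 4) ^ m)) * x := by
        refine sum_le_sum fun m _ => ?_
        have hgap : t (m + 1) - t m = 4 * (m + 1) := by
          simp only [t]
          push_cast
          ring
        calc (t (m + 1) - t m) * prob (fun S : Fin n → Γ => t m < n - maxUnb (List.ofFn S))
            ≤ 4 * (m + 1) * ((2 * m + 3) * (3 / 2 * (3 / 4) ^ m * x)) := by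
              rw [hgap]
              gcongr
              exact prob_lt_sub_maxUnb_le n m
          _ = 4 * (m + 1) * ((2 * m + 3) * (3 / 2 * (3 / 4) ^ m)) * x := by ring
    _ ≤ 1440 / Fintype.card Γ := by
        rw [← sum_mul, div_eq_mul_inv]
        refine mul_le_mul_of_nonneg_right ?_ (by positivity)
        exact sum_le_hasSum _ (fun m _ => by positivity) hasSum_layer_bounds

end Expectation

/-- there is an absolute constant `c > 0` such that for every alphabet of size
`σ ≥ 2` and every `n`, the expected value of `n - L(S)` for uniformly random `S ∈ Σⁿ` is at most
`c / σ`; i.e. `E[L(S)] = n - O(σ⁻¹)`. -/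
theorem expected_maxUnbordered : ∃ c : ℝ, 0 < c ∧
    ∀ (σ : ℕ), 2 ≤ σ → ∀ (Γ : Type) [Fintype Γ], Fintype.card Γ = σ → ∀ n : ℕ,
      (∑ S : Fin n → Γ, ((n : ℝ) - (maxUnb (List.ofFn S) : ℝ))) / (σ : ℝ) ^ n ≤ c / σ := by
  refine ⟨1440, by norm_num, ?_⟩
  rintro _ hσ Γ _ rfl n
  exact expected_maxUnbordered_general hσ n
end
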